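/- No deterministic online algorithm for problem SP has competitive ratio smaller than 3: for every deterministic online algorithm A, every real c < 3 and every real γ, there exist T ∈ ℕ, β > 0 and nonnegative cost functions g_1,…,g_T such that Cost_A > c·Opt + γ, where Cost_A is the cost of the schedule produced by A on this input. -/

import Mathlib

/-- The cost of a schedule `s` (with states encoded as reals): the operating
cost at time `t` is `(1 - s t) * g0 t + s t * g1 t`, which agrees with
`g_t(s_t)` for binary schedules, plus the switching cost `β·(s t − s (t−1))⁺`. -/
noncomputable def cost (T : ℕ) (β : ℝ) (g0 g1 : ℕ → ℝ) (s : ℕ → ℝ) : ℝ :=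
  ∑ t ∈ Finset.Icc 1 T, ((1 - s t) * g0 t + s t * g1 t + β * max (s t - s (t - 1)) 0)

/-- The offline optimal value `Opt` of problem SP: the infimum of costs over
all binary schedules starting in state `0`. -/
noncomputable def opt (T : ℕ) (β : ℝ) (g0 g1 : ℕ → ℝ) : ℝ :=
  sInf {c : ℝ | ∃ s : ℕ → ℝ, (∀ t, s t = 0 ∨ s t = 1) ∧ s 0 = 0 ∧ c = cost T β g0 g1 s}

/-!
The adversary charges `ε` for the state the algorithm occupied one step earlier and nothing for
the other one. If the algorithm's schedule `a` has `U` switches from `0` to `1` within `T` steps,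
it pays `ε` in every step without a switch, so about `εT - 2εU + βU` in total. Compare with three
offline schedules: always off, always on, and always opposite to the algorithm's previous state.
The first two together pay about `εT`, the third never pays an operating cost and pays about `βU`
for switching. So `3 * opt` exceeds the algorithm's cost by at most about `2εU`, which is
negligible against `βU` for small `ε`; the additive errors vanish relative to the algorithm's cost
as `T → ∞`.
-/

/-- Binary schedules with free initial state, the states being encoded as reals as in `cost`. -/
def IsBinary (s : ℕ → ℝ) : Prop :=
  ∀ t, s t = 0 ∨ s t = 1

/-- Online algorithms for a fixed switching cost: the state at time `t` depends only on the cost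
functions up to time `t`. -/
def IsOnline (B : (ℕ → ℝ) → (ℕ → ℝ) → ℕ → ℝ) : Prop :=
  ∀ g0 g1 g0' g1' t, (∀ τ, τ ≤ t → g0 τ = g0' τ ∧ g1 τ = g1' τ) → B g0 g1 t = B g0' g1' t

/-- The number of switches from `0` to `1` of a binary schedule up to time `T`, written so that
it makes sense for every real sequence. -/
noncomputable def upSwitches (s : ℕ → ℝ) (T : ℕ) : ℝ :=
  ∑ n ∈ Finset.range T, max (s (n + 1) - s n) 0

/-- The schedule that starts in state `0` and then runs one step behind `r`. Offline, this lets
the state at time `t` be any function of what the algorithm did at time `t - 1`. -/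
def delay (r : ℕ → ℝ) : ℕ → ℝ
  | 0 => 0
  | n + 1 => r n

/-- The adversary's cost of state `0` against the schedule `a`: `ε` if `a` was in state `0` one
step earlier. The value at time `0` never enters `cost`. -/
def offPenalty (ε : ℝ) (a : ℕ → ℝ) : ℕ → ℝ
  | 0 => 0
  | n + 1 => ε * (1 - a n)

/-- The adversary's cost of state `1` against the schedule `a`: `ε` if `a` was in state `1` one
step earlier. The value at time `0` never enters `cost`. -/
def onPenalty (ε : ℝ) (a : ℕ → ℝ) : ℕ → ℝ
  | 0 => 0
  | n + 1 => ε * a n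

namespace IsBinary

variable {s : ℕ → ℝ}

lemma nonneg (hs : IsBinary s) (t : ℕ) : 0 ≤ s t := by
  rcases hs t with h | h <;> simp [h]

lemma le_one (hs : IsBinary s) (t : ℕ) : s t ≤ 1 := by
  rcases hs t with h | h <;> simp [h]

lemma one_sub (hs : IsBinary s) : IsBinary (1 - s) := fun t ↦ by
  rcases hs t with h | h <;> simp [h]

lemma delay (hs : IsBinary s) : IsBinary (delay s)
  | 0 => Or.inl rfl
  | n + 1 => hs n

end IsBinary

lemma upSwitches_nonneg (s : ℕ → ℝ) (T : ℕ) : 0 ≤ upSwitches s T :=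
  Finset.sum_nonneg fun _ _ ↦ le_max_right _ _

lemma upSwitches_le_succ (s : ℕ → ℝ) (T : ℕ) : upSwitches s T ≤ upSwitches s (T + 1) := by
  rw [upSwitches, upSwitches, Finset.sum_range_succ]
  exact le_add_of_nonneg_right (le_max_right _ _)

lemma upSwitches_one_sub (s : ℕ → ℝ) (T : ℕ) :
    upSwitches (1 - s) T = upSwitches s T - (s T - s 0) := by
  rw [upSwitches, upSwitches, ← Finset.sum_range_sub, ← Finset.sum_sub_distrib]
  refine Finset.sum_congr rfl fun n _ ↦ ?_
  rw [← max_sub_sub_right]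
  simp [max_comm]

lemma upSwitches_delay_le {r : ℕ → ℝ} (hr : r 0 ≤ 1) (T : ℕ) :
    upSwitches (delay r) T ≤ upSwitches r T + 1 := by
  cases T with
  | zero => simp [upSwitches]
  | succ n =>
    have hsplit : upSwitches (delay r) (n + 1) = upSwitches r n + max (r 0) 0 := by
      simp [upSwitches, Finset.sum_range_succ', delay]
    rw [hsplit]
    exact add_le_add (upSwitches_le_succ r n) (max_le hr zero_le_one)

lemma cost_eq_operating_add_switching (T : ℕ) (β : ℝ) (g0 g1 s : ℕ → ℝ) :
    cost T β g0 g1 s =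
      ∑ n ∈ Finset.range T, ((1 - s (n + 1)) * g0 (n + 1) + s (n + 1) * g1 (n + 1)) +
        β * upSwitches s T := by
  induction T with
  | zero => simp [cost, upSwitches]
  | succ n ih =>
    rw [cost] at ih ⊢
    rw [Finset.sum_Icc_succ_top (by lia), ih, upSwitches, upSwitches, Finset.sum_range_succ,
      Finset.sum_range_succ, Nat.add_sub_cancel]
    ring

section Opt

variable {T : ℕ} {β : ℝ} {g0 g1 : ℕ → ℝ}

lemma mul_upSwitches_le_cost (hg : ∀ t, 1 ≤ t → t ≤ T → 0 ≤ g0 t ∧ 0 ≤ g1 t) {s : ℕ → ℝ}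
    (hs : IsBinary s) : β * upSwitches s T ≤ cost T β g0 g1 s := by
  rw [cost_eq_operating_add_switching]
  refine le_add_of_nonneg_left (Finset.sum_nonneg fun n hn ↦ ?_)
  obtain ⟨h0, h1⟩ := hg (n + 1) (by lia) (Finset.mem_range.1 hn)
  exact add_nonneg (mul_nonneg (sub_nonneg.2 (hs.le_one _)) h0) (mul_nonneg (hs.nonneg _) h1)

lemma cost_nonneg (hβ : 0 ≤ β) (hg : ∀ t, 1 ≤ t → t ≤ T → 0 ≤ g0 t ∧ 0 ≤ g1 t) {s : ℕ → ℝ}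
    (hs : IsBinary s) : 0 ≤ cost T β g0 g1 s :=
  (mul_nonneg hβ (upSwitches_nonneg s T)).trans (mul_upSwitches_le_cost hg hs)

lemma opt_nonneg (hβ : 0 ≤ β) (hg : ∀ t, 1 ≤ t → t ≤ T → 0 ≤ g0 t ∧ 0 ≤ g1 t) :
    0 ≤ opt T β g0 g1 := by
  refine Real.sInf_nonneg ?_
  rintro _ ⟨s, hs, -, rfl⟩
  exact cost_nonneg hβ hg hs

lemma opt_le_cost (hβ : 0 ≤ β) (hg : ∀ t, 1 ≤ t → t ≤ T → 0 ≤ g0 t ∧ 0 ≤ g1 t) {s : ℕ → ℝ}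
    (hs : IsBinary s) (hs0 : s 0 = 0) : opt T β g0 g1 ≤ cost T β g0 g1 s := by
  refine csInf_le ⟨0, ?_⟩ ⟨s, hs, hs0, rfl⟩
  rintro _ ⟨s, hs, -, rfl⟩
  exact cost_nonneg hβ hg hs

lemma opt_le_delay (hβ : 0 ≤ β) (hg : ∀ t, 1 ≤ t → t ≤ T → 0 ≤ g0 t ∧ 0 ≤ g1 t) {r : ℕ → ℝ}
    (hr : IsBinary r) :
    opt T β g0 g1 ≤
      ∑ n ∈ Finset.range T, ((1 - r n) * g0 (n + 1) + r n * g1 (n + 1)) +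
        β * (upSwitches r T + 1) :=
  calc
    opt T β g0 g1 ≤ cost T β g0 g1 (delay r) := opt_le_cost hβ hg hr.delay rfl
    _ = ∑ n ∈ Finset.range T, ((1 - r n) * g0 (n + 1) + r n * g1 (n + 1)) +
        β * upSwitches (delay r) T := cost_eq_operating_add_switching T β g0 g1 (delay r)
    _ ≤ _ := by gcongr; exact upSwitches_delay_le (hr.le_one 0) T

end Opt

section Penalty

variable {ε β : ℝ} {a : ℕ → ℝ}

lemma penalty_nonneg (hε : 0 ≤ ε) (ha : IsBinary a) :
    ∀ t, 0 ≤ offPenalty ε a t ∧ 0 ≤ onPenalty ε a t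
  | 0 => ⟨le_rfl, le_rfl⟩
  | n + 1 => ⟨mul_nonneg hε (sub_nonneg.2 (ha.le_one n)), mul_nonneg hε (ha.nonneg n)⟩

lemma cost_penalty_self (ha : IsBinary a) (T : ℕ) :
    cost T β (offPenalty ε a) (onPenalty ε a) a =
      ε * (T + a T - a 0) + (β - 2 * ε) * upSwitches a T := by
  have hstep (n : ℕ) : (1 - a (n + 1)) * (ε * (1 - a n)) + a (n + 1) * (ε * a n) =
      ε * (1 + (a (n + 1) - a n) - 2 * max (a (n + 1) - a n) 0) := by
    rcases ha n with h | h <;> rcases ha (n + 1) with h' | h' <;> norm_num [h, h']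
  have hoperating : ∑ n ∈ Finset.range T,
      ((1 - a (n + 1)) * offPenalty ε a (n + 1) + a (n + 1) * onPenalty ε a (n + 1)) =
        ε * (T + (a T - a 0) - 2 * upSwitches a T) := by
    simp only [offPenalty, onPenalty, hstep, ← Finset.mul_sum,
      Finset.sum_sub_distrib (fun n ↦ 1 + (a (n + 1) - a n)), Finset.sum_add_distrib,
      Finset.sum_range_sub, upSwitches]
    simp
  rw [cost_eq_operating_add_switching, hoperating]
  ring

lemma three_mul_opt_penalty_le (hε : 0 ≤ ε) (hβ : 0 ≤ β) (ha : IsBinary a) (T : ℕ) :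
    3 * opt T β (offPenalty ε a) (onPenalty ε a) ≤ ε * T + β * (upSwitches a T + 4) := by
  have hg : ∀ t, 1 ≤ t → t ≤ T → 0 ≤ offPenalty ε a t ∧ 0 ≤ onPenalty ε a t :=
    fun t _ _ ↦ penalty_nonneg hε ha t
  have hoff : opt T β (offPenalty ε a) (onPenalty ε a) ≤
      ∑ n ∈ Finset.range T, ε * (1 - a n) + β := by
    simpa [upSwitches, offPenalty] using opt_le_delay hβ hg (r := 0) fun _ ↦ Or.inl rfl
  have hon : opt T β (offPenalty ε a) (onPenalty ε a) ≤
      ∑ n ∈ Finset.range T, ε * a n + β := by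
    simpa [upSwitches, onPenalty] using opt_le_delay hβ hg (r := 1) fun _ ↦ Or.inr rfl
  have hconst : ∑ n ∈ Finset.range T, ε * (1 - a n) + ∑ n ∈ Finset.range T, ε * a n = ε * T := by
    simp [← Finset.mul_sum, ← mul_add]
  have hfree (n : ℕ) : (1 - (1 - a) n) * offPenalty ε a (n + 1) +
      (1 - a) n * onPenalty ε a (n + 1) = 0 := by
    rcases ha n with h | h <;> simp [offPenalty, onPenalty, h]
  have hopposite : opt T β (offPenalty ε a) (onPenalty ε a) ≤ β * (upSwitches a T + 2) := by
    have h := opt_le_delay hβ hg ha.one_sub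
    simp only [hfree, Finset.sum_const_zero, zero_add, upSwitches_one_sub] at h
    refine h.trans (mul_le_mul_of_nonneg_left ?_ hβ)
    linarith [ha.nonneg T, ha.le_one 0]
  linarith

lemma mul_sub_one_le_cost_penalty_self (hε : 0 ≤ ε) (hεβ : 2 * ε ≤ β) (ha : IsBinary a)
    (T : ℕ) :
    ε * (T - 1) ≤ cost T β (offPenalty ε a) (onPenalty ε a) a := by
  rw [cost_penalty_self ha]
  have hT : (T - 1 : ℝ) ≤ T + a T - a 0 := by linarith [ha.nonneg T, ha.le_one 0]
  exact (mul_le_mul_of_nonneg_left hT hε).trans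
    (le_add_of_nonneg_right (mul_nonneg (sub_nonneg.2 hεβ) (upSwitches_nonneg a T)))

lemma three_mul_opt_penalty_le_cost {δ : ℝ} (hδ : 0 ≤ δ) (hδ1 : δ ≤ 1) (hβ : 0 ≤ β)
    (ha : IsBinary a) (T : ℕ) :
    3 * opt T β (offPenalty (δ * β) a) (onPenalty (δ * β) a) ≤
      (1 + 2 * δ) * cost T β (offPenalty (δ * β) a) (onPenalty (δ * β) a) a + 5 * β := by
  have hε : 0 ≤ δ * β := mul_nonneg hδ hβ
  have hopt := three_mul_opt_penalty_le hε hβ ha T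
  have hcost := cost_penalty_self (ε := δ * β) (β := β) ha T
  have hswitch : 2 * δ * (β * upSwitches a T) ≤
      2 * δ * cost T β (offPenalty (δ * β) a) (onPenalty (δ * β) a) a := by
    gcongr
    exact mul_upSwitches_le_cost (fun t _ _ ↦ penalty_nonneg hε ha t) ha
  have hinitial : δ * β * (a 0 - a T) ≤ β :=
    mul_le_of_le_one_right hε (by linarith [ha.nonneg T, ha.le_one 0]) |>.trans
      (mul_le_of_le_one_left hβ hδ1)
  linarith

end Penalty

lemma exists_isFixedPt_of_eqOn_Iio {ι α : Type*} [Preorder ι] [WellFoundedLT ι] [Nonempty α]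
    {F : (ι → α) → ι → α} (hF : ∀ x y i, Set.EqOn x y (Set.Iio i) → F x i = F y i) :
    ∃ x, Function.IsFixedPt F x := by
  classical
  let step (i : ι) (x : ∀ j, j < i → α) : α :=
    F (fun j ↦ if h : j < i then x j h else Classical.arbitrary α) i
  refine ⟨WellFoundedLT.fix step, funext fun i ↦ ?_⟩
  rw [WellFoundedLT.fix_eq]
  refine hF _ _ i fun j hj ↦ ?_
  simp only [dif_pos (Set.mem_Iio.1 hj)]

lemma IsOnline.exists_run_against_penalty {B : (ℕ → ℝ) → (ℕ → ℝ) → ℕ → ℝ} (hB : IsOnline B)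
    (ε : ℝ) : ∃ a, B (offPenalty ε a) (onPenalty ε a) = a := by
  refine exists_isFixedPt_of_eqOn_Iio (F := fun a ↦ B (offPenalty ε a) (onPenalty ε a))
    fun a b t hab ↦ hB _ _ _ _ t fun τ hτ ↦ ?_
  cases τ with
  | zero => exact ⟨rfl, rfl⟩
  | succ n => simp only [offPenalty, onPenalty, hab (Set.mem_Iio.2 hτ), and_self]

lemma mul_add_lt_of_three_mul_le {c γ δ b K O : ℝ} (hδ : 0 ≤ δ) (hcδ : c ≤ 3 - 12 * δ)
    (hδ3 : 12 * δ ≤ 3) (hb : 0 ≤ b) (hK : 0 ≤ K) (hO : 0 ≤ O)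
    (hOK : 3 * O ≤ (1 + 2 * δ) * K + b) (hlarge : b + γ < 2 * δ * K) : c * O + γ < K := by
  have hcO : c * O ≤ (1 - 2 * δ) * K + b :=
    calc
      c * O ≤ (3 - 12 * δ) * O := mul_le_mul_of_nonneg_right hcδ hO
      _ = (3 - 12 * δ) * (3 * O) / 3 := by ring
      _ ≤ (3 - 12 * δ) * ((1 + 2 * δ) * K + b) / 3 := by gcongr
      _ = (1 - 2 * δ) * K + b - (8 * (δ * δ * K) + 4 * (δ * b)) := by ring
      _ ≤ (1 - 2 * δ) * K + b := sub_le_self _ (by positivity)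
  linarith

theorem stmt3_general (B : (ℕ → ℝ) → (ℕ → ℝ) → ℕ → ℝ) (hBin : ∀ g0 g1, IsBinary (B g0 g1))
    (hB : IsOnline B) {β : ℝ} (hβ : 0 < β) {c : ℝ} (hc : c < 3) (γ : ℝ) :
    ∃ (T : ℕ) (g0 g1 : ℕ → ℝ), (∀ t, 1 ≤ t → t ≤ T → 0 ≤ g0 t ∧ 0 ≤ g1 t) ∧
      cost T β g0 g1 (B g0 g1) > c * opt T β g0 g1 + γ := by
  obtain ⟨δ, hδ, hcδ, hδ3⟩ : ∃ δ : ℝ, 0 < δ ∧ c ≤ 3 - 12 * δ ∧ 12 * δ ≤ 3 :=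
    ⟨(3 - max c 0) / 12, by linarith [max_lt hc three_pos], by linarith [le_max_left c 0],
      by linarith [le_max_right c 0]⟩
  obtain ⟨a, hrun⟩ := hB.exists_run_against_penalty (δ * β)
  have ha : IsBinary a := hrun ▸ hBin _ _
  have hδβ : 0 < δ * β := mul_pos hδ hβ
  obtain ⟨T, hT⟩ := exists_nat_gt ((5 * β + γ) / (2 * δ * (δ * β)) + 1)
  rw [← lt_sub_iff_add_lt, div_lt_iff₀ (by positivity)] at hT
  have hg : ∀ t, 1 ≤ t → t ≤ T → 0 ≤ offPenalty (δ * β) a t ∧ 0 ≤ onPenalty (δ * β) a t :=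
    fun t _ _ ↦ penalty_nonneg hδβ.le ha t
  refine ⟨T, offPenalty (δ * β) a, onPenalty (δ * β) a, hg, ?_⟩
  rw [hrun]
  have h2δβ : 2 * (δ * β) ≤ β := by linarith [mul_le_mul_of_nonneg_right hδ3 hβ.le]
  have hcost := mul_sub_one_le_cost_penalty_self hδβ.le h2δβ ha T
  have hopt := three_mul_opt_penalty_le_cost hδ.le (by linarith) hβ.le ha T
  have hlarge := hT.trans_le <| calc
    (T - 1) * (2 * δ * (δ * β)) = 2 * δ * (δ * β * (T - 1)) := by ring
    _ ≤ 2 * δ * cost T β (offPenalty (δ * β) a) (onPenalty (δ * β) a) a := by gcongr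
  exact mul_add_lt_of_three_mul_le hδ.le hcδ hδ3 (by positivity) (cost_nonneg hβ.le hg ha)
    (opt_nonneg hβ.le hg) hopt hlarge

/-- no deterministic online algorithm for problem SP has
competitive ratio smaller than 3. Here `A β g0 g1 t` is the state chosen by
the algorithm at time `t`; the algorithm is binary-valued, starts at state `0`,
and is online (its decision at time `t` only depends on `β` and the prefix
`g_1, …, g_t` of the cost functions). -/
theorem stmt3 (A : ℝ → (ℕ → ℝ) → (ℕ → ℝ) → ℕ → ℝ)
    (hBin : ∀ β g0 g1 t, A β g0 g1 t = 0 ∨ A β g0 g1 t = 1)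
    (hInit : ∀ β g0 g1, A β g0 g1 0 = 0)
    (hOnline : ∀ β g0 g1 g0' g1' t,
      (∀ τ, τ ≤ t → g0 τ = g0' τ ∧ g1 τ = g1' τ) →
      A β g0 g1 t = A β g0' g1' t)
    (c γ : ℝ) (hc : c < 3) :
    ∃ (T : ℕ) (β : ℝ), 0 < β ∧ ∃ g0 g1 : ℕ → ℝ,
      (∀ t, 1 ≤ t → t ≤ T → 0 ≤ g0 t ∧ 0 ≤ g1 t) ∧
      cost T β g0 g1 (A β g0 g1) > c * opt T β g0 g1 + γ := by
  obtain ⟨T, g0, g1, hg, hcost⟩ := stmt3_general (A 1) (hBin 1) (hOnline 1) one_pos hc γ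
  exact ⟨T, 1, one_pos, g0, g1, hg, hcost⟩
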